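/- Let f ∈ ℬ be convenient and Newton nondegenerate with Newton polytope P, and assume that every closed face of the Newton boundary of P is a simplex. Then the following identity of polynomials holds in ℤ[z]: (1−z)^n + Σ_Δ z^{dim Δ + 1}·(1−z)^{n−1−dim Δ} = Σ_{Δ'} (z−1)^{n−1−dim Δ'}, where the first sum runs over all closed faces Δ of the Newton boundary of P, and the second sum runs over the closed faces Δ' of the Newton boundary of P that are not contained in the union of the coordinate hyperplanes {xᵢ = 0}. (In terms of the fan Σ obtained by taking the cones over the faces of the Newton boundary of P, this is the identity z^n·E_0(z^{−1}) = E_0^*(z) between the Hodge–Deligne polynomial E_0(z) = Σ_{τ ∈ Σ}(z−1)^{n−dim τ} and the relative Hodge–Deligne polynomial E_0^*(z) = Σ_{τ ∈ Σ*}(z−1)^{n−dim τ}, where Σ* is the set of cones of Σ not contained in the coordinate hyperplanes.) -/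

import Mathlib

open MvPolynomial

namespace ToricNewton

section
variable {σ : Type*} [Fintype σ] [DecidableEq σ]

/-- Coercion of a lattice point of `ℕ^σ` into `ℝ^σ`. -/
def natToR (v : σ → ℕ) : σ → ℝ := fun i => (v i : ℝ)

/-- Coercion of an exponent (finitely supported) into `ℝ^σ`. -/
def toR (m : σ →₀ ℕ) : σ → ℝ := fun i => (m i : ℝ)

/-- The Newton polytope of a polynomial: the convex hull of `{0} ∪ supp f`. -/
noncomputable def newtonPolytope (f : MvPolynomial σ ℂ) : Set (σ → ℝ) :=
  convexHull ℝ ({0} ∪ (toR '' (f.support : Set (σ →₀ ℕ))))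

/-- The Newton function `ν`, which for a convenient polynomial is the gauge
(Minkowski functional) of the Newton polytope. -/
noncomputable def nu (f : MvPolynomial σ ℂ) (x : σ → ℝ) : ℝ :=
  gauge (newtonPolytope f) x

/-- `f` is convenient if for each variable `i` some pure power `uᵢ^k`, `k ≥ 1`,
occurs in `f` with nonzero coefficient. -/
def Convenient (f : MvPolynomial σ ℂ) : Prop :=
  ∀ i : σ, ∃ k : ℕ, 1 ≤ k ∧ f.coeff (Finsupp.single i k) ≠ 0

/-- `Δ` is a (nonempty exposed) closed face of `P`. -/
def IsFace (P Δ : Set (σ → ℝ)) : Prop :=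
  Δ.Nonempty ∧ ∃ (l : (σ → ℝ) →ₗ[ℝ] ℝ) (c : ℝ),
    (∀ x ∈ P, l x ≤ c) ∧ Δ = {x ∈ P | l x = c}

/-- A face of the Newton boundary: a closed face of the Newton polytope not
containing the origin. -/
def NBFace (f : MvPolynomial σ ℂ) (Δ : Set (σ → ℝ)) : Prop :=
  IsFace (newtonPolytope f) Δ ∧ (0 : σ → ℝ) ∉ Δ

open Classical in
/-- The truncation `g_Δ` of `g` to the monomials whose exponents lie in `Δ`. -/
noncomputable def faceRestrict (Δ : Set (σ → ℝ)) (g : MvPolynomial σ ℂ) : MvPolynomial σ ℂ :=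
  ∑ m ∈ g.support, if toR m ∈ Δ then monomial m (g.coeff m) else 0

/-- `f` is Newton nondegenerate: for every closed face `Δ` of the Newton boundary
the system `(u₁ ∂f/∂u₁)_Δ = ⋯ = (uₙ ∂f/∂uₙ)_Δ = 0` has no solution in `(ℂ*)ⁿ`. -/
def Nondegenerate (f : MvPolynomial σ ℂ) : Prop :=
  ∀ Δ : Set (σ → ℝ), NBFace f Δ →
    ¬ ∃ x : σ → ℂ, (∀ i, x i ≠ 0) ∧
        ∀ i, eval x (faceRestrict Δ (X i * pderiv i f)) = 0

/-- The ideal `ℒ` generated by the `uᵢ ∂f/∂uᵢ`. -/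
noncomputable def LIdeal (f : MvPolynomial σ ℂ) : Ideal (MvPolynomial σ ℂ) :=
  Ideal.span (Set.range fun i => X i * pderiv i f)

/-- The Jacobian ideal `ℐ` generated by the `∂f/∂uᵢ`. -/
noncomputable def IIdeal (f : MvPolynomial σ ℂ) : Ideal (MvPolynomial σ ℂ) :=
  Ideal.span (Set.range fun i => pderiv i f)

/-- The Newton filtration `𝒩_α ℬ`: the span of the monomials `u^m` with `ν(m) ≤ α`. -/
noncomputable def Nle (f : MvPolynomial σ ℂ) (α : ℝ) : Submodule ℂ (MvPolynomial σ ℂ) where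
  carrier := {g | ∀ m ∈ g.support, nu f (toR m) ≤ α}
  zero_mem' := by simp
  add_mem' := by
    intro a b ha hb m hm
    rcases Finset.mem_union.mp (MvPolynomial.support_add hm) with h | h
    · exact ha m h
    · exact hb m h
  smul_mem' := by
    intro c a ha m hm
    exact ha m (MvPolynomial.support_smul hm)

/-- The filtration `𝒩_{<α} ℬ`. -/
noncomputable def Nlt (f : MvPolynomial σ ℂ) (α : ℝ) : Submodule ℂ (MvPolynomial σ ℂ) where
  carrier := {g | ∀ m ∈ g.support, nu f (toR m) < α}
  zero_mem' := by simp
  add_mem' := by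
    intro a b ha hb m hm
    rcases Finset.mem_union.mp (MvPolynomial.support_add hm) with h | h
    · exact ha m h
    · exact hb m h
  smul_mem' := by
    intro c a ha m hm
    exact ha m (MvPolynomial.support_smul hm)

/-- The twisted filtration `W_α ℬ`: the span of the monomials `u^m` with
`ν(m + (1,…,1)) ≤ α`. -/
noncomputable def Wle (f : MvPolynomial σ ℂ) (α : ℝ) : Submodule ℂ (MvPolynomial σ ℂ) where
  carrier := {g | ∀ m ∈ g.support, nu f (toR m + 1) ≤ α}
  zero_mem' := by simp
  add_mem' := by
    intro a b ha hb m hm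
    rcases Finset.mem_union.mp (MvPolynomial.support_add hm) with h | h
    · exact ha m h
    · exact hb m h
  smul_mem' := by
    intro c a ha m hm
    exact ha m (MvPolynomial.support_smul hm)

/-- The twisted filtration `W_{<α} ℬ`. -/
noncomputable def Wlt (f : MvPolynomial σ ℂ) (α : ℝ) : Submodule ℂ (MvPolynomial σ ℂ) where
  carrier := {g | ∀ m ∈ g.support, nu f (toR m + 1) < α}
  zero_mem' := by simp
  add_mem' := by
    intro a b ha hb m hm
    rcases Finset.mem_union.mp (MvPolynomial.support_add hm) with h | h
    · exact ha m h
    · exact hb m h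
  smul_mem' := by
    intro c a ha m hm
    exact ha m (MvPolynomial.support_smul hm)

/-- The graded piece `gr^𝒩_α(ℬ/ℒ) = (𝒩_α ℬ + ℒ)/(𝒩_{<α} ℬ + ℒ)`, realized as the
image of `𝒩_α ℬ + ℒ` in `ℬ/(𝒩_{<α} ℬ + ℒ)`. -/
noncomputable def grN (f : MvPolynomial σ ℂ) (α : ℝ) :
    Submodule ℂ (MvPolynomial σ ℂ ⧸ (Nlt f α ⊔ (LIdeal f).restrictScalars ℂ)) :=
  Submodule.map (Nlt f α ⊔ (LIdeal f).restrictScalars ℂ).mkQ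
    (Nle f α ⊔ (LIdeal f).restrictScalars ℂ)

/-- `dim_ℂ gr^𝒩_α(ℬ/ℒ)`. -/
noncomputable def grDim (f : MvPolynomial σ ℂ) (α : ℝ) : ℕ :=
  Module.finrank ℂ (grN f α)

/-- The graded piece `gr^W_α(ℬ/ℐ) = (W_α ℬ + ℐ)/(W_{<α} ℬ + ℐ)`. -/
noncomputable def grW (f : MvPolynomial σ ℂ) (α : ℝ) :
    Submodule ℂ (MvPolynomial σ ℂ ⧸ (Wlt f α ⊔ (IIdeal f).restrictScalars ℂ)) :=
  Submodule.map (Wlt f α ⊔ (IIdeal f).restrictScalars ℂ).mkQ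
    (Wle f α ⊔ (IIdeal f).restrictScalars ℂ)

/-- `dim_ℂ gr^W_α(ℬ/ℐ)`. -/
noncomputable def grWDim (f : MvPolynomial σ ℂ) (α : ℝ) : ℕ :=
  Module.finrank ℂ (grW f α)

/-- The dimension of a face, i.e. of the direction of its affine span. -/
noncomputable def faceDim (Δ : Set (σ → ℝ)) : ℕ :=
  Module.finrank ℝ (affineSpan ℝ Δ).direction

/-- `Δ` is a simplex: the convex hull of an affinely independent family. -/
def IsSimplex (Δ : Set (σ → ℝ)) : Prop :=
  ∃ (k : ℕ) (p : Fin (k + 1) → (σ → ℝ)), AffineIndependent ℝ p ∧ Δ = convexHull ℝ (Set.range p)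

/-- The union of the coordinate hyperplanes. -/
def coordHyperplanes (σ : Type*) : Set (σ → ℝ) := ⋃ i : σ, {x : σ → ℝ | x i = 0}

/-- `Box(Δ)`: the set of combinations `Σ q_ℓ b_ℓ`, `q_ℓ ∈ [0,1)`, of the vertices
(extreme points) of `Δ`. -/
def Box (Δ : Set (σ → ℝ)) : Set (σ → ℝ) :=
  {x | ∃ s : Finset (σ → ℝ), ↑s ⊆ Δ.extremePoints ℝ ∧
      ∃ q : (σ → ℝ) → ℝ, (∀ b ∈ s, 0 ≤ q b ∧ q b < 1) ∧ x = ∑ b ∈ s, q b • b}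

/-- `Δ ∈ ℱ(P)`: a closed face of the Newton polytope of `f` not contained in the
union of the coordinate hyperplanes. -/
def FcalMem (f : MvPolynomial σ ℂ) (Δ : Set (σ → ℝ)) : Prop :=
  IsFace (newtonPolytope f) Δ ∧ ¬ Δ ⊆ coordHyperplanes σ

/-- `Box(P)`: the union of `Box(Δ)` over the closed faces of the Newton boundary
not contained in the union of the coordinate hyperplanes. -/
def BoxP (f : MvPolynomial σ ℂ) : Set (σ → ℝ) :=
  ⋃ Δ ∈ {Δ : Set (σ → ℝ) | NBFace f Δ ∧ ¬ Δ ⊆ coordHyperplanes σ}, Box Δ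

/-- The cone `ℝ₊·Δ` over `Δ`. -/
def cone0 (Δ : Set (σ → ℝ)) : Set (σ → ℝ) :=
  {x | ∃ t : ℝ, 0 ≤ t ∧ ∃ y ∈ Δ, x = t • y}

/-- The restriction of `f` obtained by setting the variables in `S` to zero. -/
noncomputable def restrictZero (S : Finset σ) (f : MvPolynomial σ ℂ) :
    MvPolynomial {j : σ // j ∉ S} ℂ :=
  aeval (fun j : σ => if h : j ∉ S then X (⟨j, h⟩ : {j : σ // j ∉ S}) else 0) f

end

end ToricNewton

namespace HDD

open Filter Topology

variable {n : ℕ}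

/-- `V` is the (linearly independent) vertex set of a face of `P` cut out by `l = 1`. -/
def IsV (P : Set (Fin n → ℝ)) (V : Finset (Fin n → ℝ)) : Prop :=
  V.Nonempty ∧ LinearIndepOn ℝ id (V : Set (Fin n → ℝ)) ∧
    ∃ l : (Fin n → ℝ) →ₗ[ℝ] ℝ, (∀ x ∈ P, l x ≤ 1) ∧
      {x ∈ P | l x = 1} = convexHull ℝ (V : Set (Fin n → ℝ))

theorem exists_fun {V : Finset (Fin n → ℝ)} (hV : LinearIndepOn ℝ id (V : Set (Fin n → ℝ)))
    (g : (Fin n → ℝ) → ℝ) : ∃ l : (Fin n → ℝ) →ₗ[ℝ] ℝ, ∀ b ∈ V, l b = g b := by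
  classical
  refine ⟨(Module.Basis.extend hV).constr ℝ (fun x => g x), fun b hb => ?_⟩
  have hb' : b ∈ hV.extend (Set.subset_univ _) := hV.subset_extend _ hb
  have h1 := (Module.Basis.extend hV).constr_basis ℝ (fun x => g x) ⟨b, hb'⟩
  have h2 : (Module.Basis.extend hV) ⟨b, hb'⟩ = b := Module.Basis.extend_apply_self hV _
  rw [h2] at h1
  exact h1

theorem le_on_hull {S : Set (Fin n → ℝ)} (l : (Fin n → ℝ) →ₗ[ℝ] ℝ) {c : ℝ}
    (h : ∀ s ∈ S, l s ≤ c) : ∀ x ∈ convexHull ℝ S, l x ≤ c := by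
  intro x hx
  have : convexHull ℝ S ⊆ {x | l x ≤ c} :=
    convexHull_min h (convex_halfSpace_le l.isLinear c)
  exact this hx

theorem lt_on_hull {S : Set (Fin n → ℝ)} (l : (Fin n → ℝ) →ₗ[ℝ] ℝ) {c : ℝ}
    (h : ∀ s ∈ S, l s < c) : ∀ x ∈ convexHull ℝ S, l x < c := by
  intro x hx
  have : convexHull ℝ S ⊆ {x | l x < c} :=
    convexHull_min h (convex_halfSpace_lt l.isLinear c)
  exact this hx

theorem small_pos (a b : ℝ) (h : 0 < a ∨ (a = 0 ∧ 0 < b)) :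
    ∀ᶠ e in 𝓝[>] (0 : ℝ), 0 < a + e * b := by
  rcases h with h | ⟨rfl, h⟩
  · have : Tendsto (fun e : ℝ => a + e * b) (𝓝 0) (𝓝 (a + 0 * b)) := by
      apply Continuous.tendsto; fun_prop
    rw [zero_mul, add_zero] at this
    exact (this.eventually (lt_mem_nhds h)).filter_mono nhdsWithin_le_nhds
  · filter_upwards [self_mem_nhdsWithin] with e he
    have he : 0 < e := he
    positivity

/-- Subsets of vertex sets are vertex sets. -/
theorem IsV.sub {S : Finset (Fin n → ℝ)} {V W : Finset (Fin n → ℝ)}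
    (hV : IsV (convexHull ℝ (S : Set (Fin n → ℝ))) V) (hWV : W ⊆ V) (hW : W.Nonempty) :
    IsV (convexHull ℝ (S : Set (Fin n → ℝ))) W := by
  classical
  obtain ⟨-, hli, l, hl, hf⟩ := hV
  have hl1 : ∀ b ∈ V, b ∈ convexHull ℝ (S : Set (Fin n → ℝ)) ∧ l b = 1 := by
    intro b hb
    have : b ∈ {x ∈ convexHull ℝ (S : Set (Fin n → ℝ)) | l x = 1} := by
      rw [hf]; exact subset_convexHull _ _ hb
    exact this
  obtain ⟨l', hl'⟩ := exists_fun hli (fun b => if b ∈ W then 0 else -1)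
  have hl'le : ∀ x ∈ convexHull ℝ (V : Set (Fin n → ℝ)), l' x ≤ 0 := by
    apply le_on_hull
    intro s hs
    rw [hl' s hs]; split_ifs <;> norm_num
  have hev : ∀ᶠ e in 𝓝[>] (0 : ℝ), ∀ s ∈ S, l s + e * l' s ≤ 1 := by
    rw [Filter.eventually_all_finset]
    intro s hs
    have hsP := subset_convexHull ℝ (S : Set (Fin n → ℝ)) hs
    rcases (hl s hsP).lt_or_eq with h | h
    · filter_upwards [small_pos (1 - l s) (- l' s) (Or.inl (by linarith))] with e he
      nlinarith
    · have : l' s ≤ 0 := hl'le s (by rw [← hf]; exact ⟨hsP, h⟩)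
      filter_upwards [self_mem_nhdsWithin] with e he
      have he : 0 < e := he
      nlinarith
  obtain ⟨e, he, he0⟩ := (hev.and self_mem_nhdsWithin).exists
  have he0 : 0 < e := he0
  have he' : ∀ x ∈ convexHull ℝ (S : Set (Fin n → ℝ)), l x + e * l' x ≤ 1 := by
    intro x hx
    have := le_on_hull (S := (S : Set (Fin n → ℝ))) (l + e • l') (c := 1)
      (fun s hs => by simpa using he s hs) x hx
    simpa using this
  refine ⟨hW, hli.mono (by exact_mod_cast hWV), l + (e / 2) • l', ?_, ?_⟩
  · intro x hx
    have h1 := he' x hx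
    have h2 := hl x hx
    simp only [LinearMap.add_apply, LinearMap.smul_apply, smul_eq_mul]
    linarith
  · ext x
    simp only [LinearMap.add_apply, LinearMap.smul_apply, smul_eq_mul, Set.mem_ofPred_eq]
    constructor
    · rintro ⟨hx, hx1⟩
      have h1 := he' x hx
      have h2 := hl x hx
      have h3 : l x = 1 := by linarith
      have h4 : l' x = 0 := by
        have : e * l' x = 0 := by linarith
        rcases mul_eq_zero.1 this with h | h
        · linarith
        · exact h
      have hxV : x ∈ convexHull ℝ (V : Set (Fin n → ℝ)) := by rw [← hf]; exact ⟨hx, h3⟩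
      rw [Finset.mem_convexHull'] at hxV
      obtain ⟨w, hw0, hw1, hwx⟩ := hxV
      have hz : ∀ b ∈ V, b ∉ W → w b = 0 := by
        have hs : ∑ b ∈ V, w b * (if b ∈ W then 0 else 1) = 0 := by
          have hq := congrArg l' hwx
          rw [h4, map_sum] at hq
          rw [← neg_eq_zero, ← Finset.sum_neg_distrib]
          refine Eq.trans (Finset.sum_congr rfl fun b hb => ?_) hq
          rw [map_smul, hl' b hb]; split_ifs <;> simp
        rw [Finset.sum_eq_zero_iff_of_nonneg] at hs
        · intro b hb hbW
          simpa [hbW] using hs b hb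
        · intro b hb
          have := hw0 b hb
          split_ifs <;> simp [this]
      rw [Finset.mem_convexHull']
      refine ⟨w, fun y hy => hw0 y (hWV hy), ?_, ?_⟩
      · rw [← hw1]; exact Finset.sum_subset hWV fun b hb hbW => hz b hb hbW
      · rw [← hwx]; exact Finset.sum_subset hWV fun b hb hbW => by rw [hz b hb hbW, zero_smul]
    · intro hx
      have hxV : x ∈ convexHull ℝ (V : Set (Fin n → ℝ)) :=
        convexHull_mono (by exact_mod_cast hWV) hx
      rw [← hf] at hxV
      have h0 : 0 ≤ l' x := by
        have := le_on_hull (S := (W : Set (Fin n → ℝ))) (-l') (c := 0) (fun s hs => by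
          have := hl' s (hWV hs)
          rw [if_pos (by exact_mod_cast hs)] at this
          simp [this]) x hx
        simpa using this
      have h1 := he' x hxV.1
      have h2 : l' x = 0 := by
        have h3 := hxV.2
        have : e * l' x ≤ 0 := by linarith
        nlinarith
      exact ⟨hxV.1, by rw [h2, hxV.2]; ring⟩

/-- A vertex admits a functional which is maximal exactly there. -/
theorem IsV.vertex {S : Finset (Fin n → ℝ)} {V : Finset (Fin n → ℝ)}
    (hV : IsV (convexHull ℝ (S : Set (Fin n → ℝ))) V) {t : Fin n → ℝ} (ht : t ∈ V)
    {T : Finset (Fin n → ℝ)} (hT : (T : Set (Fin n → ℝ)) ⊆ convexHull ℝ (S : Set (Fin n → ℝ)))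
    (htT : t ∈ convexHull ℝ (T : Set (Fin n → ℝ))) : t ∈ T := by
  obtain ⟨-, -, l, hl, hf⟩ := hV.sub (W := {t}) (by simpa using ht) (by simp)
  by_contra hn
  have hlt : l t = 1 := by
    have : t ∈ {x ∈ convexHull ℝ (S : Set (Fin n → ℝ)) | l x = 1} := by rw [hf]; simp
    exact this.2
  have := lt_on_hull (S := (T : Set (Fin n → ℝ))) l (c := 1) (fun s hs => by
    refine lt_of_le_of_ne (hl s (hT hs)) fun h => ?_
    have : s ∈ {x ∈ convexHull ℝ (S : Set (Fin n → ℝ)) | l x = 1} := ⟨hT hs, h⟩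
    rw [hf] at this
    simp at this
    subst this
    exact hn hs) t htT
  linarith

theorem IsV.subset {S : Finset (Fin n → ℝ)} {V : Finset (Fin n → ℝ)}
    (hV : IsV (convexHull ℝ (S : Set (Fin n → ℝ))) V) : V ⊆ S := by
  intro t ht
  refine hV.vertex ht (subset_convexHull _ _) ?_
  obtain ⟨-, -, l, hl, hf⟩ := hV
  have : t ∈ {x ∈ convexHull ℝ (S : Set (Fin n → ℝ)) | l x = 1} := by
    rw [hf]; exact subset_convexHull _ _ ht
  exact this.1

theorem IsV.mem_of_eq_one {S : Finset (Fin n → ℝ)} {V W : Finset (Fin n → ℝ)}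
    (hV : IsV (convexHull ℝ (S : Set (Fin n → ℝ))) V)
    (hW : IsV (convexHull ℝ (S : Set (Fin n → ℝ))) W)
    {t : Fin n → ℝ} (ht : t ∈ V) (htW : t ∈ convexHull ℝ (W : Set (Fin n → ℝ))) : t ∈ W := by
  refine hV.vertex ht ?_ htW
  exact (Finset.coe_subset.2 hW.subset).trans (subset_convexHull _ _)

theorem IsV.inj {S : Finset (Fin n → ℝ)} {V W : Finset (Fin n → ℝ)}
    (hV : IsV (convexHull ℝ (S : Set (Fin n → ℝ))) V)
    (hW : IsV (convexHull ℝ (S : Set (Fin n → ℝ))) W)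
    (h : convexHull ℝ (V : Set (Fin n → ℝ)) = convexHull ℝ (W : Set (Fin n → ℝ))) : V = W := by
  apply Finset.Subset.antisymm
  · intro t ht
    exact hV.mem_of_eq_one hW ht (h ▸ subset_convexHull _ _ ht)
  · intro t ht
    exact hW.mem_of_eq_one hV ht (h.symm ▸ subset_convexHull _ _ ht)

theorem cover {S : Finset (Fin n → ℝ)} (hn : 1 ≤ n) (h0 : 0 ∈ S)
    (hk : ∀ i, ∃ k : ℝ, 0 < k ∧ Pi.single i k ∈ S) {y : Fin n → ℝ} (hy : ∀ i, 0 < y i) :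
    ∃ l : (Fin n → ℝ) →ₗ[ℝ] ℝ, (∀ x ∈ convexHull ℝ (S : Set (Fin n → ℝ)), l x ≤ 1) ∧
      ∃ t : ℝ, 0 < t ∧ t • y ∈ convexHull ℝ (S : Set (Fin n → ℝ)) ∧ l (t • y) = 1 := by
  classical
  set P := convexHull ℝ (S : Set (Fin n → ℝ)) with hP
  choose k hk0 hkS using hk
  have hPc : Convex ℝ P := convex_convexHull _ _
  have hPk : IsCompact P := S.finite_toSet.isCompact_convexHull (𝕜 := ℝ)
  have h0P : (0 : Fin n → ℝ) ∈ P := subset_convexHull _ _ h0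
  let U : Set (Fin n → ℝ) := {x | (∀ i, 0 < x i) ∧ ∑ i, x i / k i < 1}
  have hUo : IsOpen U := by
    have h1 : IsOpen (⋂ i, {x : Fin n → ℝ | 0 < x i}) :=
      isOpen_iInter_of_finite fun i => isOpen_lt continuous_const (continuous_apply i)
    have h2 : IsOpen {x : Fin n → ℝ | ∑ i, x i / k i < 1} :=
      isOpen_lt (by fun_prop) continuous_const
    convert h1.inter h2 using 1
    ext x
    simp [U]
  have hUP : U ⊆ P := by
    rintro x ⟨hx0, hx1⟩
    have := hPc.sum_mem (t := Finset.univ)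
      (w := fun o : Option (Fin n) => o.elim (1 - ∑ i, x i / k i) (fun i => x i / k i))
      (z := fun o : Option (Fin n) => o.elim 0 (fun i => Pi.single i (k i)))
      (by
        rintro (_ | i) -
        · simp only [Option.elim]; linarith
        · exact (div_pos (hx0 i) (hk0 i)).le)
      (by rw [Fintype.sum_option]; simp)
      (by
        rintro (_ | i) -
        · exact h0P
        · exact subset_convexHull _ _ (hkS i))
    rw [Fintype.sum_option] at this
    convert this using 1
    ext j
    simp only [Option.elim, smul_zero, zero_add, Finset.sum_apply, Pi.smul_apply, smul_eq_mul]
    rw [Finset.sum_eq_single j]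
    · have := (hk0 j).ne'
      rw [Pi.single_eq_same]; field_simp
    · intro i _ hij
      rw [Pi.single_eq_of_ne hij.symm, mul_zero]
    · simp
  obtain ⟨d, hd0, hdU⟩ : ∃ d : ℝ, 0 < d ∧ d • y ∈ U := by
    have hs : 0 ≤ ∑ i, y i / k i := Finset.sum_nonneg fun i _ => (div_pos (hy i) (hk0 i)).le
    refine ⟨1 / (∑ i, y i / k i + 1), by positivity, fun i => ?_, ?_⟩
    · have := hy i
      simp only [Pi.smul_apply, smul_eq_mul]; positivity
    · simp only [Pi.smul_apply, smul_eq_mul, mul_div_assoc]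
      rw [← Finset.mul_sum, one_div_mul_eq_div, div_lt_one (by positivity)]
      linarith
  have hdI : d • y ∈ interior P := interior_maximal hUP hUo hdU
  let T : Set ℝ := {t | t • y ∈ P}
  have hTc : IsClosed T := hPk.isClosed.preimage (by fun_prop : Continuous fun t : ℝ => t • y)
  have hTb : Bornology.IsBounded T := by
    obtain ⟨C, hC⟩ := hPk.isBounded.exists_norm_le
    let i : Fin n := ⟨0, hn⟩
    refine (Metric.isBounded_iff_subset_closedBall 0).2 ⟨C / y i, fun t ht => ?_⟩
    have h1 := (norm_le_pi_norm (t • y) i).trans (hC _ ht)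
    rw [mem_closedBall_zero_iff, le_div_iff₀ (hy i)]
    rw [Pi.smul_apply, norm_smul] at h1
    rwa [Real.norm_of_nonneg (hy i).le] at h1
  have hTk : IsCompact T := Metric.isCompact_of_isClosed_isBounded hTc hTb
  have hdT : d ∈ T := interior_subset (s := P) hdI
  have hmT := hTk.sSup_mem ⟨d, hdT⟩
  set m := sSup T with hm
  have hmax : ∀ t ∈ T, t ≤ m := fun t ht => le_csSup hTk.bddAbove ht
  have hmI : m • y ∉ interior P := by
    intro h
    have : Tendsto (fun t : ℝ => t • y) (𝓝 m) (𝓝 (m • y)) := by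
      apply Continuous.tendsto; fun_prop
    have h1 := this.eventually (isOpen_interior.mem_nhds h)
    have h2 : ∀ᶠ t in 𝓝[>] m, t • y ∈ interior P := h1.filter_mono nhdsWithin_le_nhds
    obtain ⟨t, ht, htm⟩ := (h2.and self_mem_nhdsWithin).exists
    exact absurd (hmax t (interior_subset (s := P) ht)) (not_le.2 htm)
  obtain ⟨g, hg⟩ := geometric_hahn_banach_open_point hPc.interior isOpen_interior hmI
  have hgP : ∀ x ∈ P, g x ≤ g (m • y) := by
    have hcl := hPc.closure_interior_eq_closure_of_nonempty_interior ⟨_, hdI⟩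
    intro x hx
    have hx : x ∈ closure (interior P) := by rw [hcl]; exact subset_closure hx
    have : closure (interior P) ⊆ {x | g x ≤ g (m • y)} :=
      closure_minimal (fun a ha => (hg a ha).le) (isClosed_le g.continuous continuous_const)
    exact this hx
  have h1 := hg _ hdI
  have hdm := hmax d hdT
  rw [map_smul, map_smul, smul_eq_mul, smul_eq_mul] at h1
  have hgy : 0 < g y := by nlinarith
  have hm0 : 0 < m := by linarith
  have hc : 0 < m * g y := by positivity
  refine ⟨(m * g y)⁻¹ • (g : (Fin n → ℝ) →ₗ[ℝ] ℝ), fun x hx => ?_, m, hm0, hmT, ?_⟩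
  · have := hgP x hx
    rw [map_smul, smul_eq_mul] at this
    simp only [LinearMap.smul_apply, smul_eq_mul, ContinuousLinearMap.coe_coe]
    rw [inv_mul_le_iff₀ hc]; linarith
  · simp only [LinearMap.smul_apply, smul_eq_mul, ContinuousLinearMap.coe_coe, map_smul]
    field_simp

open Classical in
/-- Coordinate functionals with respect to a linearly independent set. -/
noncomputable def coord (V : Finset (Fin n → ℝ)) (b : Fin n → ℝ) : (Fin n → ℝ) →ₗ[ℝ] ℝ :=
  if h : LinearIndepOn ℝ id (V : Set (Fin n → ℝ)) then
    (exists_fun h (fun b' => if b' = b then 1 else 0)).choose else 0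

open Classical in
theorem coord_apply {V : Finset (Fin n → ℝ)} (h : LinearIndepOn ℝ id (V : Set (Fin n → ℝ)))
    (b : Fin n → ℝ) {b' : Fin n → ℝ} (hb' : b' ∈ V) :
    coord V b b' = if b' = b then 1 else 0 := by
  rw [coord, dif_pos h]
  exact (exists_fun h (fun b' => if b' = b then 1 else 0)).choose_spec b' hb'

theorem coord_sum {V : Finset (Fin n → ℝ)} (h : LinearIndepOn ℝ id (V : Set (Fin n → ℝ)))
    {b : Fin n → ℝ} (hb : b ∈ V) (a : (Fin n → ℝ) → ℝ) :
    coord V b (∑ b' ∈ V, a b' • b') = a b := by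
  classical
  rw [map_sum, Finset.sum_eq_single b]
  · rw [map_smul, coord_apply h b hb]; simp
  · intro b' hb' hne
    rw [map_smul, coord_apply h b hb']; simp [hne]
  · exact fun h' => absurd hb h'

open Classical in
theorem coord_sum_sub {V W : Finset (Fin n → ℝ)}
    (h : LinearIndepOn ℝ id (V : Set (Fin n → ℝ))) (hW : W ⊆ V) (b : Fin n → ℝ) :
    coord V b (∑ b' ∈ W, b') = if b ∈ W then 1 else 0 := by
  rw [map_sum, Finset.sum_congr rfl fun b' hb' => coord_apply h b (hW hb')]
  simp

theorem span_top {V : Finset (Fin n → ℝ)} (h : LinearIndepOn ℝ id (V : Set (Fin n → ℝ)))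
    (hc : V.card = n) : Submodule.span ℝ (V : Set (Fin n → ℝ)) = ⊤ := by
  apply Submodule.eq_top_of_finrank_eq
  rw [finrank_span_finset_eq_card h, hc]
  simp

theorem sum_coord {V : Finset (Fin n → ℝ)} (h : LinearIndepOn ℝ id (V : Set (Fin n → ℝ)))
    (hc : V.card = n) (y : Fin n → ℝ) : ∑ b ∈ V, coord V b y • b = y := by
  classical
  have : (∑ b ∈ V, (coord V b).smulRight b) = LinearMap.id := by
    refine LinearMap.ext_on (span_top h hc) fun b hb => ?_
    simp only [LinearMap.coe_sum, Finset.sum_apply, LinearMap.smulRight_apply, LinearMap.id_coe, id]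
    rw [Finset.sum_congr rfl fun b' _ => by rw [coord_apply h b' hb]]
    rw [Finset.sum_eq_single b]
    · simp
    · intro b' _ hne; simp [hne.symm]
    · exact fun h' => absurd hb h'
  have h2 := congrArg (fun φ : (Fin n → ℝ) →ₗ[ℝ] (Fin n → ℝ) => φ y) this
  simpa using h2

theorem card_le {V : Finset (Fin n → ℝ)} (h : LinearIndepOn ℝ id (V : Set (Fin n → ℝ))) :
    V.card ≤ n := by
  have h1 := finrank_span_finset_eq_card (R := ℝ) h
  have h2 := Submodule.finrank_le (Submodule.span ℝ (V : Set (Fin n → ℝ)))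
  rw [h1] at h2
  simpa using h2

/-- The geometric hypotheses on the finite set of exponents. -/
structure Ctx (S : Finset (Fin n → ℝ)) : Prop where
  pos : 1 ≤ n
  zero : 0 ∈ S
  nonneg : ∀ s ∈ S, ∀ i, 0 ≤ s i
  axis : ∀ i, ∃ k : ℝ, 0 < k ∧ Pi.single i k ∈ S
  face : ∀ l : (Fin n → ℝ) →ₗ[ℝ] ℝ, (∀ x ∈ convexHull ℝ (S : Set (Fin n → ℝ)), l x ≤ 1) →
    (∃ x ∈ convexHull ℝ (S : Set (Fin n → ℝ)), l x = 1) →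
    ∃ V, IsV (convexHull ℝ (S : Set (Fin n → ℝ))) V ∧
      {x ∈ convexHull ℝ (S : Set (Fin n → ℝ)) | l x = 1} = convexHull ℝ (V : Set (Fin n → ℝ))

/-- Genericity of a vector with respect to `S`. -/
def Gen (S : Finset (Fin n → ℝ)) (w : Fin n → ℝ) : Prop :=
  ∀ W ⊆ S, W.card < n → w ∉ Submodule.span ℝ (W : Set (Fin n → ℝ))

theorem Gen.neg {S : Finset (Fin n → ℝ)} {w : Fin n → ℝ} (h : Gen S w) : Gen S (-w) := by
  intro W hW hc hm
  exact h W hW hc (by simpa using hm)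

theorem exists_gen (S : Finset (Fin n → ℝ)) : ∃ v : Fin n → ℝ, (∀ i, 0 < v i) ∧ Gen S v := by
  classical
  let B : Set (Fin n → ℝ) := ⋃ W ∈ (S.powerset.filter fun W => W.card < n),
    (Submodule.span ℝ (W : Set (Fin n → ℝ)) : Set (Fin n → ℝ))
  have hB : MeasureTheory.volume B = 0 := by
    refine (MeasureTheory.measure_biUnion_null_iff (Finset.countable_toSet _)).2 ?_
    intro W hW
    have hW := (Finset.mem_filter.1 hW).2
    apply MeasureTheory.Measure.addHaar_submodule
    intro htop
    have h1 := finrank_span_finset_le_card (R := ℝ) W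
    rw [Set.finrank, htop] at h1
    simp at h1
    omega
  let O : Set (Fin n → ℝ) := ⋂ i, {x : Fin n → ℝ | 0 < x i}
  have hO : IsOpen O :=
    isOpen_iInter_of_finite fun i => isOpen_lt continuous_const (continuous_apply i)
  have hOn : O.Nonempty := ⟨fun _ => 1, by simp [O]⟩
  have hOm := hO.measure_pos MeasureTheory.volume hOn
  have : ¬ O ⊆ B := fun h => by
    have := MeasureTheory.measure_mono_null h hB
    exact hOm.ne' this
  obtain ⟨v, hvO, hvB⟩ := Set.not_subset.1 this
  refine ⟨v, by simpa [O] using hvO, fun W hW hc hm => hvB ?_⟩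
  refine Set.mem_biUnion (x := W) ?_ hm
  simp [hW, hc]

theorem Gen.coord_ne {S : Finset (Fin n → ℝ)} {w : Fin n → ℝ} (h : Gen S w)
    {V : Finset (Fin n → ℝ)} (hV : IsV (convexHull ℝ (S : Set (Fin n → ℝ))) V)
    (hc : V.card = n) {b : Fin n → ℝ} (hb : b ∈ V) : coord V b w ≠ 0 := by
  classical
  intro h0
  refine h (V.erase b) ((Finset.erase_subset _ _).trans hV.subset) ?_ ?_
  · exact (Finset.card_erase_lt_of_mem hb).trans_eq hc
  · rw [← sum_coord hV.2.1 hc w, ← Finset.add_sum_erase V _ hb, h0, zero_smul, zero_add]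
    exact Submodule.sum_mem _ fun b' hb' =>
      Submodule.smul_mem _ _ (Submodule.subset_span (by exact_mod_cast hb'))

theorem uniq {S : Finset (Fin n → ℝ)} {w : Fin n → ℝ} {σ σ' τ : Finset (Fin n → ℝ)}
    (hσ : IsV (convexHull ℝ (S : Set (Fin n → ℝ))) σ) (hc : σ.card = n)
    (hσ' : IsV (convexHull ℝ (S : Set (Fin n → ℝ))) σ') (hc' : σ'.card = n)
    (hτ : τ ⊆ σ) (hτ' : τ ⊆ σ')
    (h : ∀ b ∈ σ, b ∉ τ → 0 < coord σ b w) (h' : ∀ b ∈ σ', b ∉ τ → 0 < coord σ' b w) :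
    σ = σ' := by
  classical
  have key : ∀ ρ : Finset (Fin n → ℝ), IsV (convexHull ℝ (S : Set (Fin n → ℝ))) ρ → τ ⊆ ρ →
      (∀ b ∈ ρ, b ∉ τ → 0 < coord ρ b w) →
      ∀ᶠ e in 𝓝[>] (0 : ℝ), ∀ b ∈ ρ, 0 < coord ρ b (∑ t ∈ τ, t + e • w) := by
    intro ρ hρ hτρ hpos
    rw [Filter.eventually_all_finset]
    intro b hb
    have := small_pos (coord ρ b (∑ t ∈ τ, t)) (coord ρ b w) (by
      rw [coord_sum_sub hρ.2.1 hτρ]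
      by_cases hbt : b ∈ τ
      · simp [hbt]
      · simp [hbt, hpos b hb hbt])
    filter_upwards [this] with e he
    simpa using he
  obtain ⟨e, he, he'⟩ := ((key σ hσ hτ h).and (key σ' hσ' hτ' h')).exists
  generalize (∑ t ∈ τ, t + e • w) = y at he he'
  have main : ∀ ρ ρ' : Finset (Fin n → ℝ), IsV (convexHull ℝ (S : Set (Fin n → ℝ))) ρ →
      IsV (convexHull ℝ (S : Set (Fin n → ℝ))) ρ' → ρ.card = n →
      (∀ b ∈ ρ, 0 < coord ρ b y) →
      ∀ l l' : (Fin n → ℝ) →ₗ[ℝ] ℝ, (∀ b ∈ ρ, l b = 1) → (∀ b ∈ ρ, l' b ≤ 1) →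
      l' y ≤ l y ∧ (l' y = l y → ∀ b ∈ ρ, l' b = 1) := by
    intro ρ ρ' hρ hρ' hcρ hpos l l' hl hl'
    have e1 : l y = ∑ b ∈ ρ, coord ρ b y * 1 := by
      conv_lhs => rw [← sum_coord hρ.2.1 hcρ y]
      rw [map_sum]
      exact Finset.sum_congr rfl fun b hb => by rw [map_smul, hl b hb, smul_eq_mul]
    have e2 : l' y = ∑ b ∈ ρ, coord ρ b y * l' b := by
      conv_lhs => rw [← sum_coord hρ.2.1 hcρ y]
      rw [map_sum]
      exact Finset.sum_congr rfl fun b hb => by rw [map_smul, smul_eq_mul]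
    have hle : ∀ b ∈ ρ, coord ρ b y * l' b ≤ coord ρ b y * 1 := fun b hb =>
      mul_le_mul_of_nonneg_left (hl' b hb) (hpos b hb).le
    refine ⟨by rw [e1, e2]; exact Finset.sum_le_sum hle, fun heq b hb => ?_⟩
    rw [e1, e2, Finset.sum_eq_sum_iff_of_le hle] at heq
    exact mul_left_cancel₀ (hpos b hb).ne' (heq b hb)
  have hSub : ∀ ρ : Finset (Fin n → ℝ), IsV (convexHull ℝ (S : Set (Fin n → ℝ))) ρ → ∀ b ∈ ρ,
      b ∈ convexHull ℝ (S : Set (Fin n → ℝ)) := fun ρ hρ b hb =>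
    subset_convexHull _ _ (hρ.subset hb)
  obtain ⟨l, hl, hf⟩ := hσ.2.2
  obtain ⟨l', hl', hf'⟩ := hσ'.2.2
  have hl1 : ∀ b ∈ σ, l b = 1 := fun b hb => by
    have : b ∈ {x ∈ convexHull ℝ (S : Set (Fin n → ℝ)) | l x = 1} := by
      rw [hf]; exact subset_convexHull _ _ hb
    exact this.2
  have hl1' : ∀ b ∈ σ', l' b = 1 := fun b hb => by
    have : b ∈ {x ∈ convexHull ℝ (S : Set (Fin n → ℝ)) | l' x = 1} := by
      rw [hf']; exact subset_convexHull _ _ hb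
    exact this.2
  have m1 := main σ σ' hσ hσ' hc he l l' hl1 fun b hb => hl' b (hSub σ hσ b hb)
  have m2 := main σ' σ hσ' hσ hc' he' l' l hl1' fun b hb => hl b (hSub σ' hσ' b hb)
  have hll := le_antisymm m1.1 m2.1
  refine Finset.eq_of_subset_of_card_le (fun b hb => ?_) (by rw [hc, hc'])
  refine hσ.mem_of_eq_one hσ' hb ?_
  rw [← hf']
  exact ⟨hSub σ hσ b hb, m1.2 hll b hb⟩

theorem exist {S : Finset (Fin n → ℝ)} (hS : Ctx S) {w : Fin n → ℝ} (hw : Gen S w)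
    {τ : Finset (Fin n → ℝ)} (hτ : τ = ∅ ∨ IsV (convexHull ℝ (S : Set (Fin n → ℝ))) τ)
    (hpos : ∀ᶠ e in 𝓝[>] (0 : ℝ), ∀ i, 0 < (∑ t ∈ τ, t + e • w) i) :
    ∃ σ, IsV (convexHull ℝ (S : Set (Fin n → ℝ))) σ ∧ σ.card = n ∧ τ ⊆ σ ∧
      ∀ b ∈ σ, b ∉ τ → 0 < coord σ b w := by
  classical
  set x := ∑ t ∈ τ, t with hx
  have hcov : ∀ᶠ e in 𝓝[>] (0 : ℝ), ∃ σ, IsV (convexHull ℝ (S : Set (Fin n → ℝ))) σ ∧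
      ∃ a : (Fin n → ℝ) → ℝ, (∀ b ∈ σ, 0 ≤ a b) ∧ x + e • w = ∑ b ∈ σ, a b • b := by
    filter_upwards [hpos] with e he
    obtain ⟨l, hl, t, ht, htP, hlt⟩ := cover hS.pos hS.zero hS.axis he
    obtain ⟨V, hV, hVf⟩ := hS.face l hl ⟨_, htP, hlt⟩
    have : t • (x + e • w) ∈ convexHull ℝ (V : Set (Fin n → ℝ)) := by
      rw [← hVf]; exact ⟨htP, hlt⟩
    rw [Finset.mem_convexHull'] at this
    obtain ⟨a, ha0, -, ha⟩ := this
    refine ⟨V, hV, fun b => t⁻¹ * a b, fun b hb => ?_, ?_⟩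
    · have := ha0 b hb
      positivity
    · simp only [mul_smul]
      rw [← Finset.smul_sum, ha, smul_smul, inv_mul_cancel₀ ht.ne', one_smul]
  obtain ⟨σ, hσ, hfr⟩ : ∃ σ, IsV (convexHull ℝ (S : Set (Fin n → ℝ))) σ ∧
      ∃ᶠ e in 𝓝[>] (0 : ℝ),
      ∃ a : (Fin n → ℝ) → ℝ, (∀ b ∈ σ, 0 ≤ a b) ∧ x + e • w = ∑ b ∈ σ, a b • b := by
    by_contra! hcon
    have hall : ∀ᶠ e in 𝓝[>] (0 : ℝ), ∀ σ ∈ S.powerset,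
        IsV (convexHull ℝ (S : Set (Fin n → ℝ))) σ →
        ¬ ∃ a : (Fin n → ℝ) → ℝ, (∀ b ∈ σ, 0 ≤ a b) ∧ x + e • w = ∑ b ∈ σ, a b • b := by
      rw [Filter.eventually_all_finset]
      intro σ _
      by_cases hσ : IsV (convexHull ℝ (S : Set (Fin n → ℝ))) σ
      · have := hcon σ hσ
        filter_upwards [this] with e he _ h'
        obtain ⟨a, ha, hax⟩ := h'
        exact he a ha hax
      · exact Filter.Eventually.of_forall fun _ h => absurd h hσ
    obtain ⟨e, h1, h2⟩ := (hcov.and hall).exists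
    obtain ⟨σ, hσ, ha⟩ := h1
    exact h2 σ (Finset.mem_powerset.2 hσ.subset) hσ ha
  have hli := hσ.2.1
  have hc : σ.card = n := by
    refine le_antisymm (card_le hli) (not_lt.1 fun hlt => hw σ hσ.subset hlt ?_)
    have hspan : ∀ e : ℝ, (∃ a : (Fin n → ℝ) → ℝ, (∀ b ∈ σ, 0 ≤ a b) ∧
        x + e • w = ∑ b ∈ σ, a b • b) → x + e • w ∈ Submodule.span ℝ (σ : Set (Fin n → ℝ)) := by
      rintro e ⟨a, -, ha⟩
      rw [ha]
      exact Submodule.sum_mem _ fun b hb =>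
        Submodule.smul_mem _ _ (Submodule.subset_span (by exact_mod_cast hb))
    obtain ⟨e1, h1, h1'⟩ := (hfr.and_eventually self_mem_nhdsWithin).exists
    have h1' : 0 < e1 := h1'
    obtain ⟨e2, h2, h2'⟩ := (hfr.and_eventually (Ioo_mem_nhdsGT h1')).exists
    have hd := Submodule.sub_mem _ (hspan e1 h1) (hspan e2 h2)
    have he : x + e1 • w - (x + e2 • w) = (e1 - e2) • w := by rw [sub_smul]; abel
    rw [he] at hd
    exact (Submodule.smul_mem_iff _ (by have := h2'.2; linarith)).1 hd
  have hcoord : ∀ b ∈ σ, ∃ᶠ e in 𝓝[>] (0 : ℝ), 0 ≤ coord σ b x + e * coord σ b w := by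
    intro b hb
    refine hfr.mono ?_
    rintro e ⟨a, ha0, ha⟩
    have := congrArg (coord σ b) ha
    rw [coord_sum hli hb] at this
    have h2 := ha0 b hb
    rw [← this] at h2
    simpa using h2
  have hx0 : ∀ b ∈ σ, 0 ≤ coord σ b x := by
    intro b hb
    by_contra! hneg
    have := small_pos (- coord σ b x) (- coord σ b w) (Or.inl (by linarith))
    obtain ⟨e, h1, h2⟩ := ((hcoord b hb).and_eventually this).exists
    linarith
  have hwb : ∀ b ∈ σ, coord σ b x = 0 → 0 < coord σ b w := by
    intro b hb h0
    obtain ⟨e, h1, h2⟩ := ((hcoord b hb).and_eventually self_mem_nhdsWithin).exists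
    have h2 : 0 < e := h2
    rw [h0, zero_add] at h1
    exact lt_of_le_of_ne (nonneg_of_mul_nonneg_right h1 h2) (hw.coord_ne hσ hc hb).symm
  have hsub : τ ⊆ σ := by
    rcases hτ with rfl | hτ
    · simp
    obtain ⟨l, hl, hf⟩ := hσ.2.2
    obtain ⟨l', hl', hf'⟩ := hτ.2.2
    have hP : ∀ ρ : Finset (Fin n → ℝ), IsV (convexHull ℝ (S : Set (Fin n → ℝ))) ρ → ∀ b ∈ ρ,
        b ∈ convexHull ℝ (S : Set (Fin n → ℝ)) := fun ρ hρ b hb =>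
      subset_convexHull _ _ (hρ.subset hb)
    have hl1 : ∀ b ∈ σ, l b = 1 := fun b hb => by
      have : b ∈ {x ∈ convexHull ℝ (S : Set (Fin n → ℝ)) | l x = 1} := by
        rw [hf]; exact subset_convexHull _ _ hb
      exact this.2
    have hl1' : ∀ b ∈ τ, l' b = 1 := fun b hb => by
      have : b ∈ {x ∈ convexHull ℝ (S : Set (Fin n → ℝ)) | l' x = 1} := by
        rw [hf']; exact subset_convexHull _ _ hb
      exact this.2
    have i1 : l' x ≤ l x := by
      rw [← sum_coord hli hc x, map_sum, map_sum]
      refine Finset.sum_le_sum fun b hb => ?_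
      rw [map_smul, map_smul, smul_eq_mul, smul_eq_mul, hl1 b hb]
      exact mul_le_mul_of_nonneg_left (hl' b (hP σ hσ b hb)) (hx0 b hb)
    have hle : ∀ b ∈ τ, l b ≤ l' b := fun b hb => by
      rw [hl1' b hb]; exact hl b (hP τ hτ b hb)
    have heq : ∑ b ∈ τ, l b = ∑ b ∈ τ, l' b := by
      refine le_antisymm (Finset.sum_le_sum hle) ?_
      rw [hx, map_sum, map_sum] at i1
      exact i1
    rw [Finset.sum_eq_sum_iff_of_le hle] at heq
    intro t ht
    refine hτ.mem_of_eq_one hσ ht ?_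
    rw [← hf]
    exact ⟨hP τ hτ t ht, by rw [heq t ht, hl1' t ht]⟩
  refine ⟨σ, hσ, hc, hsub, fun b hb hbt => hwb b hb ?_⟩
  rw [hx, coord_sum_sub hli hsub, if_neg hbt]

theorem interval_sum {A : Type*} [CommRing A] (a b : A) {R σ : Finset (Fin n → ℝ)}
    [DecidableEq (Fin n → ℝ)] (h : R ⊆ σ) (hc : σ.card = n) :
    ∑ τ ∈ Finset.Icc R σ, a ^ τ.card * b ^ (n - τ.card) =
      a ^ R.card * (a + b) ^ (n - R.card) := by
  have hcd : (σ \ R).card = n - R.card := by rw [Finset.card_sdiff_of_subset h, hc]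
  rw [Finset.Icc_eq_image_powerset h, Finset.sum_image]
  · rw [← hcd, ← Finset.sum_pow_mul_eq_add_pow, Finset.mul_sum]
    refine Finset.sum_congr rfl fun t ht => ?_
    have ht := Finset.mem_powerset.1 ht
    have hd : Disjoint R t := (Finset.disjoint_sdiff (s := R) (t := σ)).mono_right ht
    rw [Finset.card_union_of_disjoint hd, hcd, pow_add, Nat.sub_add_eq, mul_assoc]
  · intro s hs t ht hst
    have hs := Finset.mem_powerset.1 hs
    have ht := Finset.mem_powerset.1 ht
    have hst : R ∪ s = R ∪ t := hst
    have h1 : Disjoint R s := (Finset.disjoint_sdiff (s := R) (t := σ)).mono_right hs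
    have h2 : Disjoint R t := (Finset.disjoint_sdiff (s := R) (t := σ)).mono_right ht
    rw [← Finset.union_sdiff_cancel_left h1, hst, Finset.union_sdiff_cancel_left h2]

open Classical in
/-- The negative vertices of `σ` with respect to `w`. -/
noncomputable def neg (w : Fin n → ℝ) (σ : Finset (Fin n → ℝ)) : Finset (Fin n → ℝ) :=
  σ.filter fun b => coord σ b w < 0

theorem neg_subset (w : Fin n → ℝ) (σ : Finset (Fin n → ℝ)) : neg w σ ⊆ σ :=
  Finset.filter_subset _ _

theorem neg_iff {S : Finset (Fin n → ℝ)} {w : Fin n → ℝ} (hw : Gen S w)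
    {σ τ : Finset (Fin n → ℝ)} (hσ : IsV (convexHull ℝ (S : Set (Fin n → ℝ))) σ)
    (hc : σ.card = n) : neg w σ ⊆ τ ↔ ∀ b ∈ σ, b ∉ τ → 0 < coord σ b w := by
  classical
  constructor
  · intro h b hb hbt
    by_contra! hle
    exact hbt (h (Finset.mem_filter.2 ⟨hb, lt_of_le_of_ne hle (hw.coord_ne hσ hc hb)⟩))
  · intro h b hb
    obtain ⟨hb, hlt⟩ := Finset.mem_filter.1 hb
    by_contra hbt
    exact absurd (h b hb hbt) (not_lt.2 hlt.le)

theorem neg_card {S : Finset (Fin n → ℝ)} {w : Fin n → ℝ} (hw : Gen S w)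
    {σ : Finset (Fin n → ℝ)} (hσ : IsV (convexHull ℝ (S : Set (Fin n → ℝ))) σ)
    (hc : σ.card = n) : n - (neg (-w) σ).card = (neg w σ).card := by
  classical
  have h1 : neg (-w) σ = σ.filter fun b => ¬ coord σ b w < 0 := by
    ext b
    simp only [neg, Finset.mem_filter, map_neg, neg_lt_zero, not_lt]
    refine and_congr_right fun hb => ⟨le_of_lt, fun h => lt_of_le_of_ne h ?_⟩
    exact (hw.coord_ne hσ hc hb).symm
  have h2 := Finset.card_filter_add_card_filter_not (s := σ) (fun b => coord σ b w < 0)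
  rw [h1, neg]
  omega

theorem part_sum {A : Type*} [CommRing A] (a b : A) {S : Finset (Fin n → ℝ)} {w : Fin n → ℝ}
    (hw : Gen S w) (M Q : Finset (Finset (Fin n → ℝ)))
    (hM : ∀ σ, σ ∈ M ↔ IsV (convexHull ℝ (S : Set (Fin n → ℝ))) σ ∧ σ.card = n)
    (hQ : ∀ τ, τ ∈ Q ↔ ∃ σ, IsV (convexHull ℝ (S : Set (Fin n → ℝ))) σ ∧ σ.card = n ∧ τ ⊆ σ ∧
      ∀ b ∈ σ, b ∉ τ → 0 < coord σ b w) :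
    ∑ τ ∈ Q, a ^ τ.card * b ^ (n - τ.card) =
      ∑ σ ∈ M, a ^ (neg w σ).card * (a + b) ^ (n - (neg w σ).card) := by
  classical
  have hQM : Q = M.biUnion fun σ => Finset.Icc (neg w σ) σ := by
    ext τ
    rw [hQ, Finset.mem_biUnion]
    constructor
    · rintro ⟨σ, hσ, hc, hs, h⟩
      exact ⟨σ, (hM σ).2 ⟨hσ, hc⟩, Finset.mem_Icc.2 ⟨(neg_iff hw hσ hc).2 h, hs⟩⟩
    · rintro ⟨σ, hσ, h⟩
      obtain ⟨hσ, hc⟩ := (hM σ).1 hσ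
      obtain ⟨h1, h2⟩ := Finset.mem_Icc.1 h
      exact ⟨σ, hσ, hc, h2, (neg_iff hw hσ hc).1 h1⟩
  rw [hQM, Finset.sum_biUnion]
  · exact Finset.sum_congr rfl fun σ hσ => interval_sum a b (neg_subset w σ) ((hM σ).1 hσ).2
  · intro σ hσ σ' hσ' hne
    refine Finset.disjoint_left.2 fun τ h h' => hne ?_
    obtain ⟨hσ, hc⟩ := (hM σ).1 hσ
    obtain ⟨hσ', hc'⟩ := (hM σ').1 hσ'
    obtain ⟨h1, h2⟩ := Finset.mem_Icc.1 h
    obtain ⟨h1', h2'⟩ := Finset.mem_Icc.1 h'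
    exact uniq hσ hc hσ' hc' h2 h2' ((neg_iff hw hσ hc).1 h1) ((neg_iff hw hσ' hc').1 h1')

theorem IsV.hyper {S : Finset (Fin n → ℝ)} (hS : Ctx S) {τ : Finset (Fin n → ℝ)}
    (hτ : IsV (convexHull ℝ (S : Set (Fin n → ℝ))) τ) :
    ¬ convexHull ℝ (τ : Set (Fin n → ℝ)) ⊆ ToricNewton.coordHyperplanes (Fin n) ↔
      ∀ i, 0 < (∑ t ∈ τ, t) i := by
  have hnn : ∀ t ∈ τ, ∀ i, 0 ≤ t i := fun t ht => hS.nonneg t (hτ.subset ht)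
  constructor
  · intro h i
    obtain ⟨p, hp, hpn⟩ := Set.not_subset.1 h
    have hpi : p i ≠ 0 := fun h0 => hpn (Set.mem_iUnion.2 ⟨i, h0⟩)
    rw [Finset.mem_convexHull'] at hp
    obtain ⟨w, hw0, hw1, rfl⟩ := hp
    rw [Finset.sum_apply]
    refine lt_of_le_of_ne (Finset.sum_nonneg fun t ht => hnn t ht i) fun h0 => hpi ?_
    have h0 := (Finset.sum_eq_zero_iff_of_nonneg fun t ht => hnn t ht i).1 h0.symm
    rw [Finset.sum_apply]
    exact Finset.sum_eq_zero fun t ht => by rw [Pi.smul_apply, h0 t ht, smul_zero]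
  · intro h hsub
    have hc : (0 : ℝ) < τ.card := by exact_mod_cast hτ.1.card_pos
    have hp : ∑ t ∈ τ, (τ.card : ℝ)⁻¹ • t ∈ convexHull ℝ (τ : Set (Fin n → ℝ)) := by
      refine (convex_convexHull ℝ _).sum_mem (fun _ _ => by positivity) ?_
        (fun t ht => subset_convexHull _ _ ht)
      simp [hc.ne']
    obtain ⟨i, hi⟩ := Set.mem_iUnion.1 (hsub hp)
    have hi : (∑ t ∈ τ, (τ.card : ℝ)⁻¹ • t) i = 0 := hi
    rw [← Finset.smul_sum, Pi.smul_apply, smul_eq_mul] at hi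
    have := h i
    have : 0 < (τ.card : ℝ)⁻¹ * (∑ t ∈ τ, t) i := by positivity
    exact this.ne' hi

theorem IsV.dim {P : Set (Fin n → ℝ)} {V : Finset (Fin n → ℝ)} (hV : IsV P V) :
    ToricNewton.faceDim (convexHull ℝ (V : Set (Fin n → ℝ))) + 1 = V.card := by
  have hli : LinearIndependent ℝ (fun x : V => (x : Fin n → ℝ)) := hV.2.1
  have hai : AffineIndependent ℝ (fun x : V => (x : Fin n → ℝ)) := by
    rw [affineIndependent_iff]
    intro s w _ h
    exact linearIndependent_iff'.1 hli s w h
  have hc := hV.1.card_pos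
  have := hai.finrank_vectorSpan (n := V.card - 1) (by rw [Fintype.card_coe]; omega)
  rw [ToricNewton.faceDim, affineSpan_convexHull, direction_affineSpan]
  have hr : Set.range (fun x : V => (x : Fin n → ℝ)) = V := by simp
  rw [hr] at this
  omega

theorem simplexV {P : Set (Fin n → ℝ)} (l : (Fin n → ℝ) →ₗ[ℝ] ℝ) (hl : ∀ x ∈ P, l x ≤ 1)
    (h : ToricNewton.IsSimplex {x ∈ P | l x = 1}) :
    ∃ V, IsV P V ∧ {x ∈ P | l x = 1} = convexHull ℝ (V : Set (Fin n → ℝ)) := by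
  classical
  obtain ⟨k, p, hp, hf⟩ := h
  have hr : ((Finset.univ.image p : Finset (Fin n → ℝ)) : Set (Fin n → ℝ)) = Set.range p := by simp
  have hlp : ∀ i, l (p i) = 1 := fun i => by
    have : p i ∈ {x ∈ P | l x = 1} := by rw [hf]; exact subset_convexHull _ _ ⟨i, rfl⟩
    exact this.2
  refine ⟨Finset.univ.image p, ⟨by simp, ?_, l, hl, by rw [hr, hf]⟩, by rw [hr, hf]⟩
  rw [hr]
  have hli : LinearIndependent ℝ p := by
    rw [linearIndependent_iff']
    intro s w hw
    refine affineIndependent_iff.1 hp s w ?_ hw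
    have := congrArg l hw
    rw [map_sum, map_zero] at this
    rw [← this]
    exact Finset.sum_congr rfl fun i _ => by rw [map_smul, hlp, smul_eq_mul, mul_one]
  exact hli.linearIndepOn_id

open ToricNewton in
theorem nbface_iff {f : MvPolynomial (Fin n) ℂ}
    (hsimp : ∀ Δ : Set (Fin n → ℝ), NBFace f Δ → IsSimplex Δ) (Δ : Set (Fin n → ℝ)) :
    NBFace f Δ ↔ ∃ V, IsV (newtonPolytope f) V ∧ convexHull ℝ (V : Set (Fin n → ℝ)) = Δ := by
  constructor
  · intro hΔ
    have hs := hsimp Δ hΔ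
    obtain ⟨⟨hne, l, c, hl, rfl⟩, h0⟩ := hΔ
    have h0P : (0 : Fin n → ℝ) ∈ newtonPolytope f := subset_convexHull _ _ (by simp)
    have hc : 0 < c := by
      have h1 := hl 0 h0P
      rw [map_zero] at h1
      refine lt_of_le_of_ne h1 fun hc => h0 ⟨h0P, by rw [map_zero, hc]⟩
    have heq : {x ∈ newtonPolytope f | l x = c} = {x ∈ newtonPolytope f | (c⁻¹ • l) x = 1} := by
      ext x
      simp only [Set.mem_ofPred_eq, LinearMap.smul_apply, smul_eq_mul]
      refine and_congr_right fun _ => ?_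
      rw [inv_mul_eq_one₀ hc.ne', eq_comm]
    rw [heq] at hs ⊢
    obtain ⟨V, hV, hVf⟩ := simplexV (c⁻¹ • l) (fun x hx => by
      simp only [LinearMap.smul_apply, smul_eq_mul]
      rw [inv_mul_le_iff₀ hc, mul_one]; exact hl x hx) hs
    exact ⟨V, hV, hVf.symm⟩
  · rintro ⟨V, ⟨hne, -, l, hl, hf⟩, rfl⟩
    refine ⟨⟨?_, l, 1, hl, hf.symm⟩, ?_⟩
    · obtain ⟨b, hb⟩ := hne
      exact ⟨b, subset_convexHull _ _ hb⟩
    · rw [← hf]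
      intro h
      have := h.2
      simp at this

open ToricNewton in
open Classical in
/-- The generating set of the Newton polytope. -/
noncomputable def gens (f : MvPolynomial (Fin n) ℂ) : Finset (Fin n → ℝ) :=
  insert 0 (f.support.image toR)

open ToricNewton in
theorem newton_eq (f : MvPolynomial (Fin n) ℂ) :
    newtonPolytope f = convexHull ℝ (gens f : Set (Fin n → ℝ)) := by
  rw [newtonPolytope, gens]
  push_cast
  rw [Set.singleton_union]

open ToricNewton in
theorem ctx (hn : 1 ≤ n) {f : MvPolynomial (Fin n) ℂ} (hconv : Convenient f)
    (hsimp : ∀ Δ : Set (Fin n → ℝ), NBFace f Δ → IsSimplex Δ) : Ctx (gens f) where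
  pos := hn
  zero := by simp [gens]
  nonneg := by
    intro s hs i
    rw [gens, Finset.mem_insert, Finset.mem_image] at hs
    rcases hs with rfl | ⟨m, -, rfl⟩
    · simp
    · simp [toR]
  axis := by
    intro i
    obtain ⟨k, hk, hc⟩ := hconv i
    refine ⟨k, by exact_mod_cast hk, ?_⟩
    rw [gens, Finset.mem_insert, Finset.mem_image]
    refine Or.inr ⟨Finsupp.single i k, MvPolynomial.mem_support_iff.2 hc, ?_⟩
    ext j
    by_cases hj : j = i
    · subst hj; simp [toR]
    · simp [toR, hj]
  face := by
    intro l hl hex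
    rw [← newton_eq] at hl hex ⊢
    refine simplexV l hl (hsimp _ ⟨⟨?_, l, 1, hl, rfl⟩, ?_⟩)
    · obtain ⟨x, hx, hx1⟩ := hex
      exact ⟨x, hx, hx1⟩
    · intro h
      have := h.2
      simp at this

theorem combin {S : Finset (Fin n → ℝ)} (hS : Ctx S) (K K' : Finset (Finset (Fin n → ℝ)))
    (hK : ∀ V, V ∈ K ↔ IsV (convexHull ℝ (S : Set (Fin n → ℝ))) V)
    (hK' : ∀ V, V ∈ K' ↔ IsV (convexHull ℝ (S : Set (Fin n → ℝ))) V ∧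
      ¬ convexHull ℝ (V : Set (Fin n → ℝ)) ⊆ ToricNewton.coordHyperplanes (Fin n)) :
    (1 - Polynomial.X : Polynomial ℤ) ^ n +
      ∑ V ∈ K, Polynomial.X ^ V.card * (1 - Polynomial.X : Polynomial ℤ) ^ (n - V.card) =
    ∑ V ∈ K', (Polynomial.X - 1 : Polynomial ℤ) ^ (n - V.card) := by
  classical
  obtain ⟨v, hv0, hv⟩ := exists_gen S
  have hsub : ∀ {σ τ : Finset (Fin n → ℝ)}, IsV (convexHull ℝ (S : Set (Fin n → ℝ))) σ → τ ⊆ σ →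
      τ = ∅ ∨ IsV (convexHull ℝ (S : Set (Fin n → ℝ))) τ := by
    intro σ τ hσ h
    rcases τ.eq_empty_or_nonempty with h0 | h0
    · exact Or.inl h0
    · exact Or.inr (hσ.sub h h0)
  have hnn : ∀ {τ : Finset (Fin n → ℝ)}, (τ = ∅ ∨ IsV (convexHull ℝ (S : Set (Fin n → ℝ))) τ) →
      ∀ i, 0 ≤ (∑ t ∈ τ, t) i := by
    rintro τ (rfl | hτ) i
    · simp
    · rw [Finset.sum_apply]
      exact Finset.sum_nonneg fun t ht => hS.nonneg t (hτ.subset ht) i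
  have hM : ∀ σ, σ ∈ K.filter (fun σ => σ.card = n) ↔
      IsV (convexHull ℝ (S : Set (Fin n → ℝ))) σ ∧ σ.card = n := by
    intro σ; rw [Finset.mem_filter, hK]
  have hempty : (∅ : Finset (Fin n → ℝ)) ∉ K := fun h => by
    have := ((hK _).1 h).1
    simp at this
  have e1 := part_sum (Polynomial.X : Polynomial ℤ) (1 - Polynomial.X) hv _ (insert ∅ K) hM (by
    intro τ
    rw [Finset.mem_insert, hK]
    constructor
    · intro hτ
      refine exist hS hv hτ ?_
      filter_upwards [self_mem_nhdsWithin] with e he i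
      have he : 0 < e := he
      have h1 := hnn hτ i
      have h2 := mul_pos he (hv0 i)
      rw [Pi.add_apply, Pi.smul_apply, smul_eq_mul]
      linarith
    · rintro ⟨σ, hσ, -, h, -⟩
      exact hsub hσ h)
  have e2 := part_sum (1 : Polynomial ℤ) (Polynomial.X - 1) hv.neg _ K' hM (by
    intro τ
    rw [hK']
    constructor
    · rintro ⟨hτ, hh⟩
      rw [hτ.hyper hS] at hh
      refine exist hS hv.neg (Or.inr hτ) ?_
      rw [Filter.eventually_all]
      intro i
      filter_upwards [small_pos ((∑ t ∈ τ, t) i) ((-v) i) (Or.inl (hh i))] with e he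
      exact he
    · rintro ⟨σ, hσ, hc, h, hpos⟩
      have hev : ∀ᶠ e in 𝓝[>] (0 : ℝ), ∀ b ∈ σ, 0 < coord σ b (∑ t ∈ τ, t + e • (-v)) := by
        rw [Filter.eventually_all_finset]
        intro b hb
        have := small_pos (coord σ b (∑ t ∈ τ, t)) (coord σ b (-v)) (by
          rw [coord_sum_sub hσ.2.1 h]
          by_cases hbt : b ∈ τ
          · simp [hbt]
          · right
            exact ⟨by simp [hbt], hpos b hb hbt⟩)
        filter_upwards [this] with e he
        rw [map_add, map_smul, smul_eq_mul]
        exact he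
      obtain ⟨e, he, he0⟩ := (hev.and self_mem_nhdsWithin).exists
      have he0 : 0 < e := he0
      have hx : ∀ i, 0 < (∑ t ∈ τ, t) i := by
        intro i
        have h1 : 0 ≤ (∑ t ∈ τ, t + e • (-v)) i := by
          rw [← sum_coord hσ.2.1 hc (∑ t ∈ τ, t + e • (-v)), Finset.sum_apply]
          exact Finset.sum_nonneg fun b hb =>
            mul_nonneg (he b hb).le (hS.nonneg b (hσ.subset hb) i)
        rw [Pi.add_apply, Pi.smul_apply, smul_eq_mul, Pi.neg_apply] at h1
        have h2 := mul_pos he0 (hv0 i)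
        linarith
      have hτ : IsV (convexHull ℝ (S : Set (Fin n → ℝ))) τ := by
        rcases hsub hσ h with rfl | hτ
        · have := hx ⟨0, hS.pos⟩
          simp at this
        · exact hτ
      exact ⟨hτ, (hτ.hyper hS).2 hx⟩)
  rw [Finset.sum_insert hempty] at e1
  simp only [Finset.card_empty, pow_zero, one_mul, Nat.sub_zero, add_sub_cancel, one_pow, mul_one]
    at e1 e2
  rw [e1, e2]
  refine Finset.sum_congr rfl fun σ hσ => ?_
  obtain ⟨hσ, hc⟩ := (hM σ).1 hσ
  rw [neg_card hv hσ hc]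

end HDD

open ToricNewton in
/-- the identity `z^n E₀(z⁻¹) = E₀^*(z)` between the Hodge–Deligne
polynomial and the relative Hodge–Deligne polynomial of the fan of the Newton
polytope, written in terms of the faces of the Newton boundary. -/
theorem hodge_deligne_duality {n : ℕ} (hn : 1 ≤ n) (f : MvPolynomial (Fin n) ℂ)
    (hconv : Convenient f) (hnd : Nondegenerate f)
    (hsimp : ∀ Δ : Set (Fin n → ℝ), NBFace f Δ → IsSimplex Δ) :
    (1 - Polynomial.X : Polynomial ℤ) ^ n
      + ∑ᶠ (Δ : Set (Fin n → ℝ)) (_ : NBFace f Δ),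
          Polynomial.X ^ (faceDim Δ + 1) *
            (1 - Polynomial.X : Polynomial ℤ) ^ (n - 1 - faceDim Δ)
    = ∑ᶠ (Δ : Set (Fin n → ℝ)) (_ : NBFace f Δ ∧ ¬ Δ ⊆ coordHyperplanes (Fin n)),
        (Polynomial.X - 1 : Polynomial ℤ) ^ (n - 1 - faceDim Δ) := by
  
  classical
  have hS := HDD.ctx hn hconv hsimp
  set S := HDD.gens f with hSdef
  have hP := HDD.newton_eq f
  let K : Finset (Finset (Fin n → ℝ)) := S.powerset.filter fun V => HDD.IsV (convexHull ℝ (S : Set (Fin n → ℝ))) V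
  let K' : Finset (Finset (Fin n → ℝ)) := K.filter fun V : Finset (Fin n → ℝ) =>
    ¬ convexHull ℝ (V : Set (Fin n → ℝ)) ⊆ coordHyperplanes (Fin n)
  have hK : ∀ V, V ∈ K ↔ HDD.IsV (convexHull ℝ (S : Set (Fin n → ℝ))) V := by
    intro V
    rw [Finset.mem_filter, Finset.mem_powerset]
    exact ⟨fun h => h.2, fun h => ⟨h.subset, h⟩⟩
  have hK' : ∀ V, V ∈ K' ↔ HDD.IsV (convexHull ℝ (S : Set (Fin n → ℝ))) V ∧
      ¬ convexHull ℝ (V : Set (Fin n → ℝ)) ⊆ coordHyperplanes (Fin n) := by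
    intro V
    rw [Finset.mem_filter, hK]
  have hnb := HDD.nbface_iff hsimp
  rw [hP] at hnb
  have b1 : Set.BijOn (fun V : Finset (Fin n → ℝ) => convexHull ℝ (V : Set (Fin n → ℝ)))
      (K : Set (Finset (Fin n → ℝ))) {Δ | NBFace f Δ} := by
    refine ⟨fun V hV => (hnb _).2 ⟨V, (hK V).1 hV, rfl⟩, fun V hV W hW h => ?_, fun Δ hΔ => ?_⟩
    · exact ((hK V).1 hV).inj ((hK W).1 hW) h
    · obtain ⟨V, hV, rfl⟩ := (hnb _).1 hΔ
      exact ⟨V, (hK V).2 hV, rfl⟩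
  have b2 : Set.BijOn (fun V : Finset (Fin n → ℝ) => convexHull ℝ (V : Set (Fin n → ℝ)))
      (K' : Set (Finset (Fin n → ℝ)))
      {Δ | NBFace f Δ ∧ ¬ Δ ⊆ coordHyperplanes (Fin n)} := by
    refine ⟨fun V hV => ⟨(hnb _).2 ⟨V, ((hK' V).1 hV).1, rfl⟩, ((hK' V).1 hV).2⟩,
      fun V hV W hW h => ?_, fun Δ hΔ => ?_⟩
    · exact ((hK' V).1 hV).1.inj ((hK' W).1 hW).1 h
    · obtain ⟨hΔ, hh⟩ := hΔ
      obtain ⟨V, hV, rfl⟩ := (hnb _).1 hΔ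
      exact ⟨V, (hK' V).2 ⟨hV, hh⟩, rfl⟩
  have s1 := finsum_mem_eq_of_bijOn
    (f := fun V : Finset (Fin n → ℝ) =>
      Polynomial.X ^ V.card * (1 - Polynomial.X : Polynomial ℤ) ^ (n - V.card))
    (g := fun Δ => Polynomial.X ^ (faceDim Δ + 1) *
      (1 - Polynomial.X : Polynomial ℤ) ^ (n - 1 - faceDim Δ)) _ b1 (fun V hV => by
    have hd := ((hK V).1 hV).dim
    rw [← hd, Nat.sub_sub, add_comm 1])
  have s2 := finsum_mem_eq_of_bijOn
    (f := fun V : Finset (Fin n → ℝ) => (Polynomial.X - 1 : Polynomial ℤ) ^ (n - V.card))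
    (g := fun Δ => (Polynomial.X - 1 : Polynomial ℤ) ^ (n - 1 - faceDim Δ)) _ b2 (fun V hV => by
    have hd := ((hK' V).1 hV).1.dim
    rw [← hd, Nat.sub_sub, add_comm 1])
  rw [finsum_mem_coe_finset] at s1 s2
  have key := HDD.combin hS K K' hK hK'
  rw [s1, s2] at key
  exact key
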